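/- Let p, q be positive real numbers with 1/p + 1/q = 1. For all X, Y ∈ Mₙ(ℂ) there exists a unitary matrix U ∈ Mₙ(ℂ) such that |XY*| ≤ U (p⁻¹ |X|ᵖ + q⁻¹ |Y|^q) U* in the Löwner order. -/

import Mathlib

open scoped ComplexOrder
open Matrix

/-- The positive semidefinite square root of a positive semidefinite matrix
(the definition of the older Mathlib, which has since been removed). -/
noncomputable def Matrix.PosSemidef.sqrt {n : ℕ} {A : Matrix (Fin n) (Fin n) ℂ}
    (hA : A.PosSemidef) : Matrix (Fin n) (Fin n) ℂ :=
  hA.1.eigenvectorUnitary.1 * diagonal ((↑) ∘ Real.sqrt ∘ hA.1.eigenvalues) *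
    (star hA.1.eigenvectorUnitary : Matrix (Fin n) (Fin n) ℂ)

/-- The absolute value `|Z| = (Zᴴ Z)^(1/2)` of a square complex matrix. -/
noncomputable def matAbs {n : ℕ} (Z : Matrix (Fin n) (Fin n) ℂ) : Matrix (Fin n) (Fin n) ℂ :=
  (Matrix.posSemidef_conjTranspose_mul_self Z).sqrt

/-- Real powers of a positive semidefinite (in particular, Hermitian) matrix, obtained by
applying `t ↦ t ^ r` to the eigenvalues; junk value `0` on non-Hermitian matrices. -/
noncomputable def matRpow {n : ℕ} (A : Matrix (Fin n) (Fin n) ℂ) (r : ℝ) :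
    Matrix (Fin n) (Fin n) ℂ :=
  if hA : A.IsHermitian then hA.cfc (fun t => t ^ r) else 0

section helpers
open scoped MatrixOrder Matrix.Norms.L2Operator

lemma my_intertwine {m n : Type*} [Fintype m] [DecidableEq m] [Fintype n] [DecidableEq n]
    {M : Matrix n n ℂ} {N : Matrix m m ℂ} (hM : M.IsHermitian) (hN : N.IsHermitian)
    (S : Matrix n m ℂ) (h : M * S = S * N) (f : ℝ → ℝ) : cfc f M * S = S * cfc f N := by
  have hfin : (spectrum ℝ M ∪ spectrum ℝ N).Finite :=
    Matrix.finite_real_spectrum.union Matrix.finite_real_spectrum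
  set P : Polynomial ℝ := Lagrange.interpolate hfin.toFinset id f with hP
  have hPe : ∀ x ∈ spectrum ℝ M ∪ spectrum ℝ N, f x = P.eval x := by
    intro x hx
    have := Lagrange.eval_interpolate_at_node (s := hfin.toFinset) (v := id) f
      (Function.injective_id.injOn) (i := x) (by simpa using hx)
    simpa [hP] using this.symm
  have hM' : cfc f M = Polynomial.aeval M P := by
    rw [← cfc_polynomial P M hM.isSelfAdjoint]
    exact cfc_congr fun x hx => hPe x (Or.inl hx)
  have hN' : cfc f N = Polynomial.aeval N P := by
    rw [← cfc_polynomial P N hN.isSelfAdjoint]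
    exact cfc_congr fun x hx => hPe x (Or.inr hx)
  rw [hM', hN']
  clear hM' hN' hPe
  clear_value P
  clear hP
  have hpow : ∀ k : ℕ, M ^ k * S = S * N ^ k := by
    intro k
    induction k with
    | zero => simp
    | succ k ih => rw [pow_succ, Matrix.mul_assoc, h, ← Matrix.mul_assoc, ih, Matrix.mul_assoc, ← pow_succ]
  induction P using Polynomial.induction_on' with
  | add p q hp hq => simp [Matrix.add_mul, Matrix.mul_add, hp, hq]
  | monomial k a => simp [Polynomial.aeval_monomial, Algebra.algebraMap_eq_smul_one, hpow]

lemma my_cfc_rpow {n : Type*} [Fintype n] [DecidableEq n] {a : Matrix n n ℂ} (ha : 0 ≤ a) (s : ℝ) :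
    cfc (fun t : ℝ => t ^ s) a = a ^ s := (CFC.rpow_eq_cfc_real ha).symm

lemma my_mono {n : Type*} [Fintype n] [DecidableEq n] {a b : Matrix n n ℂ} (ha : 0 ≤ a)
    (hab : a ≤ b) {s : ℝ} (hs : s ∈ Set.Icc (0:ℝ) 1) :
    cfc (fun t : ℝ => t ^ s) a ≤ cfc (fun t : ℝ => t ^ s) b := by
  rw [my_cfc_rpow ha, my_cfc_rpow (ha.trans hab)]
  exact CFC.rpow_le_rpow hs hab

lemma my_conj_mono {m n : Type*} [Fintype m] [Fintype n] 
    {a b : Matrix n n ℂ} (hab : a ≤ b) (S : Matrix n m ℂ) : Sᴴ * a * S ≤ Sᴴ * b * S := by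
  rw [Matrix.le_iff] at *
  have := hab.conjTranspose_mul_mul_same S
  rwa [Matrix.mul_sub, Matrix.sub_mul] at this

lemma my_jensen {m n : Type*} [Fintype m] [DecidableEq m] [Fintype n] [DecidableEq n]
    {D : Matrix n n ℂ} (hD : 0 ≤ D) {S : Matrix n m ℂ} (hS : Sᴴ * S = 1) {s : ℝ}
    (hs : s ∈ Set.Icc (0:ℝ) 1) :
    Sᴴ * cfc (fun t : ℝ => t ^ s) D * S ≤ cfc (fun t : ℝ => t ^ s) (Sᴴ * D * S) := by
  set u : Matrix n n ℂ := 2 • (S * Sᴴ) - 1 with hu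
  have huS : u * S = S := by
    rw [hu, Matrix.sub_mul, Matrix.smul_mul, Matrix.mul_assoc, hS, two_smul]; simp
  have huh : uᴴ = u := by simp [hu, two_smul]
  have hSu : Sᴴ * u = Sᴴ := by
    have := congrArg conjTranspose huS
    rwa [conjTranspose_mul, huh] at this
  have hSS : (S * Sᴴ) * (S * Sᴴ) = S * Sᴴ := by
    rw [Matrix.mul_assoc, ← Matrix.mul_assoc Sᴴ, hS, Matrix.one_mul]
  have huu : u * u = 1 := by
    rw [hu, two_smul, Matrix.sub_mul, Matrix.mul_sub, Matrix.add_mul, Matrix.mul_add, hSS]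
    simp
  have hD2 : 0 ≤ u * D * u := by
    have := my_conj_mono hD u
    rwa [huh, Matrix.mul_zero, Matrix.zero_mul] at this
  have hc := @(CFC.concaveOn_rpow (A := Matrix n n ℂ) hs).2 D hD (u * D * u) hD2
    (1/2) (1/2) (by norm_num) (by norm_num) (by norm_num)
  have hM0 : 0 ≤ (1/2 : ℝ) • D + (1/2 : ℝ) • (u * D * u) :=
    add_nonneg (smul_nonneg (by norm_num) hD) (smul_nonneg (by norm_num) hD2)
  simp only at hc
  rw [← my_cfc_rpow hD, ← my_cfc_rpow hD2, ← my_cfc_rpow hM0] at hc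
  have h1 : cfc (fun t : ℝ => t ^ s) (u * D * u) * u = u * cfc (fun t : ℝ => t ^ s) D := by
    apply my_intertwine hD2.posSemidef.1 hD.posSemidef.1
    rw [Matrix.mul_assoc, huu, Matrix.mul_one]
  have hDS : 0 ≤ Sᴴ * D * S := by simpa using my_conj_mono hD S
  have h2 : cfc (fun t : ℝ => t ^ s) ((1/2 : ℝ) • D + (1/2 : ℝ) • (u * D * u)) * S
      = S * cfc (fun t : ℝ => t ^ s) (Sᴴ * D * S) := by
    apply my_intertwine hM0.posSemidef.1 hDS.posSemidef.1
    rw [Matrix.add_mul, Matrix.smul_mul, Matrix.smul_mul, Matrix.mul_assoc (u * D), huS,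
      Matrix.mul_assoc u, hu, Matrix.sub_mul, two_smul, Matrix.add_mul, Matrix.one_mul, ← smul_add,
      add_sub_cancel, ← two_smul ℝ, smul_smul]
    norm_num [Matrix.mul_assoc]
  have := my_conj_mono hc S
  rw [Matrix.mul_assoc Sᴴ (cfc _ _) S, h2, ← Matrix.mul_assoc, hS, Matrix.one_mul] at this
  refine le_trans (le_of_eq ?_) this
  have h4 : Sᴴ * cfc (fun t : ℝ => t ^ s) (u * D * u) * S = Sᴴ * cfc (fun t : ℝ => t ^ s) D * S := by
    calc _ = Sᴴ * (cfc (fun t : ℝ => t ^ s) (u * D * u) * u) * S := by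
          rw [Matrix.mul_assoc Sᴴ, Matrix.mul_assoc Sᴴ, Matrix.mul_assoc _ u S, huS]
      _ = _ := by rw [h1, ← Matrix.mul_assoc, hSu]
  rw [Matrix.mul_add, Matrix.add_mul]
  simp only [Matrix.mul_smul, Matrix.smul_mul, h4]
  rw [← add_smul]; norm_num

lemma my_cont {n : Type*} [Fintype n] [DecidableEq n] (M : Matrix n n ℂ) (f : ℝ → ℝ) :
    ContinuousOn f (spectrum ℝ M) := Matrix.finite_real_spectrum.continuousOn f

lemma my_comp {n : Type*} [Fintype n] [DecidableEq n] {M : Matrix n n ℂ} (hM : M.IsHermitian)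
    (f g : ℝ → ℝ) : cfc f (cfc g M) = cfc (fun t => f (g t)) M :=
  (cfc_comp f g M hM.isSelfAdjoint
    ((Matrix.finite_real_spectrum.image g).continuousOn f) (my_cont M g)).symm

lemma my_sq {n : Type*} [Fintype n] [DecidableEq n] {M : Matrix n n ℂ} (hM : M.IsHermitian) :
    cfc (fun t : ℝ => t * t) M = M * M := by
  rw [cfc_mul (fun t : ℝ => t) (fun t : ℝ => t) M (my_cont _ _) (my_cont _ _),
    cfc_id' ℝ M hM.isSelfAdjoint]

lemma my_spec_nonneg {n : Type*} [Fintype n] [DecidableEq n] {M : Matrix n n ℂ} (hM : 0 ≤ M)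
    {x : ℝ} (hx : x ∈ spectrum ℝ M) : 0 ≤ x := spectrum_nonneg_of_nonneg hM hx

lemma my_core {m n : Type*} [Fintype m] [DecidableEq m] [Fintype n] [DecidableEq n]
    {p q : ℝ} (hp : 0 < p) (hq : 0 < q) (hpq : 1 / p + 1 / q = 1) (hp2 : p ≤ 2)
    {A B : Matrix n n ℂ} (hA : 0 ≤ A) (hB : 0 ≤ B) (W : Matrix n m ℂ) (hW : Wᴴ * W = 1)
    (σ : m → ℝ) {l : ℝ} (hl : 0 < l) (hσ : ∀ i, l ≤ σ i)
    (hWAB : Wᴴ * (A * (B * B) * A) * W = diagonal (fun i => ((σ i ^ 2 : ℝ) : ℂ))) :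
    ∃ S : Matrix n m ℂ, Sᴴ * S = 1 ∧
      l • (1 : Matrix m m ℂ) ≤ Sᴴ * (p⁻¹ • cfc (fun t : ℝ => t ^ p) A
        + q⁻¹ • cfc (fun t : ℝ => t ^ q) B) * S := by
  have hAh : Aᴴ = A := hA.posSemidef.1
  have hBh : Bᴴ = B := hB.posSemidef.1
  have hσ0 : ∀ i, 0 < σ i := fun i => hl.trans_le (hσ i)
  have hq2 : 2 ≤ q := by
    field_simp at hpq
    nlinarith
  set d : Matrix m m ℂ := diagonal (fun i => ((σ i)⁻¹ : ℂ)) with hd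
  have hdh : dᴴ = d := by
    rw [hd, diagonal_conjTranspose]; congr 1; ext i; simp
  set T : Matrix n m ℂ := A * W * d with hT
  have hTh : Tᴴ = d * Wᴴ * A := by
    rw [hT, conjTranspose_mul, conjTranspose_mul, hdh, hAh, Matrix.mul_assoc]
  have hTB : Tᴴ * (B * B) * T = 1 := by
    have : Tᴴ * (B * B) * T = d * (Wᴴ * (A * (B * B) * A) * W) * d := by
      rw [hTh, hT]; simp only [Matrix.mul_assoc]
    rw [this, hWAB, hd, diagonal_mul_diagonal, diagonal_mul_diagonal, ← diagonal_one]
    congr 1; ext i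
    have : (σ i : ℂ) ≠ 0 := by exact_mod_cast (hσ0 i).ne'
    push_cast; field_simp
  have hWW : W * Wᴴ ≤ 1 := by
    rw [Matrix.le_iff]
    have : (1 - W * Wᴴ) = (1 - W * Wᴴ)ᴴ * (1 - W * Wᴴ) := by
      have h1 : (W * Wᴴ) * (W * Wᴴ) = W * Wᴴ := by
        rw [Matrix.mul_assoc, ← Matrix.mul_assoc Wᴴ, hW, Matrix.one_mul]
      simp [Matrix.sub_mul, Matrix.mul_sub, h1]
    rw [this]
    exact posSemidef_conjTranspose_mul_self _
  have hdd : (l ^ 2) • (d * d) ≤ 1 := by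
    rw [Matrix.le_iff]
    have : 1 - (l ^ 2) • (d * d) = diagonal (fun i => ((1 - l ^ 2 * ((σ i)⁻¹ * (σ i)⁻¹) : ℝ) : ℂ)) := by
      ext i j
      by_cases h : i = j
      · subst h; simp [hd]
      · simp [hd, h]
    rw [this, posSemidef_diagonal_iff]
    intro i
    have h1 : l ^ 2 * ((σ i)⁻¹ * (σ i)⁻¹) ≤ 1 := by
      have h2 := hσ0 i
      rw [← mul_inv, ← div_eq_mul_inv, div_le_one (by positivity)]
      nlinarith [hσ i]
    exact_mod_cast sub_nonneg.2 h1
  have hTT : (l ^ 2) • (T * Tᴴ) ≤ A * A := by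
    have h1 := (my_conj_mono hdd Wᴴ)
    rw [conjTranspose_conjTranspose, Matrix.mul_one] at h1
    have h2 := my_conj_mono (h1.trans hWW) A
    rw [hAh, Matrix.mul_one] at h2
    refine le_trans (le_of_eq ?_) h2
    rw [hTh, hT]
    simp only [Matrix.mul_assoc, Matrix.mul_smul, Matrix.smul_mul]
  have hGpd : (Tᴴ * T).PosDef := by
    refine PosDef.conjTranspose_mul_self T ?_
    intro x y hxy
    have := congrArg (fun v => (Tᴴ * (B * B)) *ᵥ v) hxy
    simpa only [mulVec_mulVec, hTB, one_mulVec] using this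
  set G := Tᴴ * T with hG
  have hG0 : 0 ≤ G := hGpd.posSemidef.nonneg
  set K := CFC.sqrt G with hK
  have hKK : K * K = G := CFC.sqrt_mul_sqrt_self G hG0
  have hKh : Kᴴ = K := (CFC.sqrt_nonneg G).posSemidef.1
  have hKu : IsUnit K.det := by
    have h1 : IsUnit G.det := (Matrix.isUnit_iff_isUnit_det _).1 hGpd.isUnit
    rw [← hKK, det_mul] at h1
    exact isUnit_of_mul_isUnit_left h1
  have hKih : (K⁻¹)ᴴ = K⁻¹ := by rw [conjTranspose_nonsing_inv, hKh]
  set S := T * K⁻¹ with hS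
  have hSh : Sᴴ = K⁻¹ * Tᴴ := by rw [hS, conjTranspose_mul, hKih]
  have hSS : Sᴴ * S = 1 := by
    have : Sᴴ * S = K⁻¹ * (K * K) * K⁻¹ := by
      rw [hKK, hG, hSh, hS]; simp only [Matrix.mul_assoc]
    rw [this, ← Matrix.mul_assoc, nonsing_inv_mul _ hKu, Matrix.one_mul, mul_nonsing_inv _ hKu]
  have hSGS : S * G * Sᴴ = T * Tᴴ := by
    rw [← hKK, hSh, hS]
    have : T * K⁻¹ * (K * K) * (K⁻¹ * Tᴴ) = T * ((K⁻¹ * K) * (K * K⁻¹)) * Tᴴ := by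
      simp only [Matrix.mul_assoc]
    rw [this, nonsing_inv_mul _ hKu, mul_nonsing_inv _ hKu]; simp
  have hSB : Sᴴ * (B * B) * S = G⁻¹ := by
    have : Sᴴ * (B * B) * S = K⁻¹ * (Tᴴ * (B * B) * T) * K⁻¹ := by
      rw [hSh, hS]; simp only [Matrix.mul_assoc]
    rw [this, hTB, Matrix.mul_one, ← hKK, Matrix.mul_inv_rev]
  refine ⟨S, hSS, ?_⟩
  set D := cfc (fun t : ℝ => t ^ q) B with hD
  have hD0 : 0 ≤ D := cfc_nonneg fun x hx => Real.rpow_nonneg (my_spec_nonneg hB hx) _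
  set E := Sᴴ * D * S with hE
  have hE0 : 0 ≤ E := by simpa using my_conj_mono hD0 S
  have hs0 : 0 < 2 / q := by positivity
  have hs1 : 2 / q ≤ 1 := by rw [div_le_one hq]; exact hq2
  have hDB : cfc (fun t : ℝ => t ^ (2 / q)) D = B * B := by
    rw [hD, my_comp hBh, ← my_sq hBh]
    apply cfc_congr
    intro x hx
    have := my_spec_nonneg hB hx
    simp only
    rw [← Real.rpow_mul this, mul_div_cancel₀ _ hq.ne', Real.rpow_two, sq]
  have hJ := my_jensen hD0 hSS ⟨hs0.le, hs1⟩
  rw [hDB, hSB, ← hE] at hJ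
  set F := cfc (fun t : ℝ => t ^ (2 / q)) E with hF
  have hGi : IsStrictlyPositive G⁻¹ := Matrix.isStrictlyPositive_iff_posDef.2 hGpd.inv
  have hFp : IsStrictlyPositive F := hGi.of_le hJ
  have hEpos : ∀ x ∈ spectrum ℝ E, 0 < x := by
    intro x hx
    rcases (my_spec_nonneg hE0 hx).eq_or_lt with h | h
    · exfalso
      have h1 : (0:ℝ) ∈ spectrum ℝ F := by
        rw [hF, cfc_map_spectrum (fun t : ℝ => t ^ (2 / q)) E hE0.posSemidef.1.isSelfAdjoint (my_cont _ _)]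
        exact ⟨x, hx, by rw [← h]; exact Real.zero_rpow hs0.ne'⟩
      exact (spectrum.zero_notMem_iff ℝ).2 hFp.isUnit h1
    · exact h
  have hFi : F⁻¹ = cfc (fun t : ℝ => t ^ (-(2 / q))) E := by
    apply inv_eq_right_inv
    rw [hF, ← cfc_mul _ _ E (my_cont _ _) (my_cont _ _), ← cfc_one ℝ E hE0.posSemidef.1.isSelfAdjoint]
    apply cfc_congr
    intro x hx
    simp only [Pi.one_apply]
    rw [← Real.rpow_add (hEpos x hx)]; simp
  have hFG : F⁻¹ ≤ G := by
    have := CStarAlgebra.ringInverse_le_ringInverse hJ hGi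
    rw [← nonsing_inv_eq_ringInverse, ← nonsing_inv_eq_ringInverse, nonsing_inv_nonsing_inv] at this
    · exact this
    · exact (Matrix.isUnit_iff_isUnit_det _).1 hGpd.isUnit
  have hFi0 : 0 ≤ F⁻¹ := by
    rw [hFi]; exact cfc_nonneg fun x hx => Real.rpow_nonneg (hEpos x hx).le _
  have hl2 : (0:ℝ) ≤ l ^ 2 := by positivity
  have hp2' : p / 2 ∈ Set.Icc (0:ℝ) 1 := ⟨by positivity, by linarith⟩
  have hmono1 := my_mono (smul_nonneg hl2 hFi0) (smul_le_smul_of_nonneg_left hFG hl2) hp2'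
  have hTT0 : 0 ≤ (l ^ 2) • (T * Tᴴ) :=
    smul_nonneg hl2 (posSemidef_self_mul_conjTranspose T).nonneg
  have hmono2 := my_conj_mono (my_mono hTT0 hTT hp2') S
  have hinter : cfc (fun t : ℝ => t ^ (p / 2)) ((l ^ 2) • (T * Tᴴ)) * S
      = S * cfc (fun t : ℝ => t ^ (p / 2)) ((l ^ 2) • G) := by
    apply my_intertwine hTT0.posSemidef.1 (smul_nonneg hl2 hG0).posSemidef.1
    rw [← hSGS, Matrix.smul_mul, Matrix.mul_smul, Matrix.mul_assoc, hSS, Matrix.mul_one]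
  rw [Matrix.mul_assoc, hinter, ← Matrix.mul_assoc, hSS, Matrix.one_mul] at hmono2
  have hAp : cfc (fun t : ℝ => t ^ (p / 2)) (A * A) = cfc (fun t : ℝ => t ^ p) A := by
    rw [← my_sq hAh, my_comp hAh]
    apply cfc_congr
    intro x hx
    have := my_spec_nonneg hA hx
    simp only
    rw [← sq, ← Real.rpow_two, ← Real.rpow_mul this]
    congr 1; ring
  rw [hAp] at hmono2
  have hEh : E.IsHermitian := hE0.posSemidef.1
  have hFE : cfc (fun t : ℝ => t ^ (p / 2)) ((l ^ 2) • F⁻¹)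
      = cfc (fun t : ℝ => (l ^ 2 * t ^ (-(2 / q))) ^ (p / 2)) E := by
    rw [hFi, ← cfc_const_mul _ _ _ (my_cont _ _), my_comp hEh]
  have hfin : l • (1 : Matrix m m ℂ) ≤
      p⁻¹ • cfc (fun t : ℝ => (l ^ 2 * t ^ (-(2 / q))) ^ (p / 2)) E + q⁻¹ • E := by
    have e1 : l • (1 : Matrix m m ℂ) = cfc (fun _ : ℝ => l) E := by
      rw [cfc_const l E hEh.isSelfAdjoint, Algebra.algebraMap_eq_smul_one]
    have e2 : q⁻¹ • E = cfc (fun t : ℝ => q⁻¹ * t) E := by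
      rw [cfc_const_mul _ _ _ (my_cont _ _), cfc_id' ℝ E hEh.isSelfAdjoint]
    rw [e1, e2, ← cfc_const_mul _ _ _ (my_cont _ _), ← cfc_add _ _ _ (my_cont _ _) (my_cont _ _)]
    refine cfc_mono ?_ (my_cont _ _) (my_cont _ _)
    intro x hx
    have hx0 := hEpos x hx
    have hc : p.HolderConjugate q := by
      rw [Real.holderConjugate_iff]
      refine ⟨?_, by simpa using hpq⟩
      have : 1 / p < 1 := by have : 0 < 1 / q := by positivity
                             linarith
      rwa [div_lt_one hp] at this
    have hy := Real.young_inequality_of_nonneg (a := l * x ^ (-(1 / q))) (b := x ^ (1 / q))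
      (by positivity) (by positivity) hc
    rw [mul_assoc, ← Real.rpow_add hx0, neg_add_cancel, Real.rpow_zero, mul_one,
      ← Real.rpow_mul hx0.le, one_div_mul_cancel hq.ne', Real.rpow_one] at hy
    have : (l ^ 2 * x ^ (-(2 / q))) = (l * x ^ (-(1 / q))) ^ (2:ℝ) := by
      rw [Real.mul_rpow hl.le (by positivity), Real.rpow_two, ← Real.rpow_mul hx0.le]
      congr 2; ring
    rw [this, ← Real.rpow_mul (by positivity), mul_div_cancel₀ _ (two_ne_zero)]
    calc l ≤ _ := hy
      _ = _ := by ring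
  refine hfin.trans ?_
  rw [Matrix.mul_add, Matrix.add_mul, Matrix.mul_smul, Matrix.mul_smul, Matrix.smul_mul,
    Matrix.smul_mul, ← hE, ← hFE]
  gcongr
  exact hmono1.trans hmono2

lemma my_key {m n : Type*} [Fintype m] [DecidableEq m] [Fintype n] [DecidableEq n]
    {p q : ℝ} (hp : 0 < p) (hq : 0 < q) (hpq : 1 / p + 1 / q = 1)
    {A B Y : Matrix n n ℂ} (hA : 0 ≤ A) (hB : 0 ≤ B) (hY : Yᴴ * Y = B * B)
    (J : Matrix n m ℂ) (hJ : Jᴴ * J = 1)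
    (σ : m → ℝ) {l : ℝ} (hl : 0 < l) (hσ : ∀ i, l ≤ σ i)
    (hM : Y * (A * A) * Yᴴ * J = J * diagonal (fun i => ((σ i ^ 2 : ℝ) : ℂ))) :
    ∃ S : Matrix n m ℂ, Sᴴ * S = 1 ∧
      l • (1 : Matrix m m ℂ) ≤ Sᴴ * (p⁻¹ • cfc (fun t : ℝ => t ^ p) A
        + q⁻¹ • cfc (fun t : ℝ => t ^ q) B) * S := by
  have hAh : Aᴴ = A := hA.posSemidef.1
  have hBh : Bᴴ = B := hB.posSemidef.1
  have hσ0 : ∀ i, (σ i : ℂ) ≠ 0 := fun i => by exact_mod_cast (hl.trans_le (hσ i)).ne'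
  set d : Matrix m m ℂ := diagonal (fun i => ((σ i)⁻¹ : ℂ)) with hd
  set D : Matrix m m ℂ := diagonal (fun i => ((σ i ^ 2 : ℝ) : ℂ)) with hD
  set M := Y * (A * A) * Yᴴ with hMdef
  have hdh : dᴴ = d := by
    rw [hd, diagonal_conjTranspose]; congr 1; ext i; simp
  have h1 : Jᴴ * M * J = D := by rw [Matrix.mul_assoc, hM, ← Matrix.mul_assoc, hJ, Matrix.one_mul]
  have h2 : Jᴴ * (M * M) * J = D * D := by
    rw [Matrix.mul_assoc, Matrix.mul_assoc, hM, ← Matrix.mul_assoc M, hM, Matrix.mul_assoc,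
      ← Matrix.mul_assoc, hJ, Matrix.one_mul]
  have h3 : Jᴴ * (M * M * M) * J = D * D * D := by
    rw [Matrix.mul_assoc, Matrix.mul_assoc, hM, ← Matrix.mul_assoc (M * M), Matrix.mul_assoc M M J, hM,
      ← Matrix.mul_assoc M, hM, Matrix.mul_assoc, Matrix.mul_assoc,
      ← Matrix.mul_assoc, hJ, Matrix.one_mul, Matrix.mul_assoc]
  have hdD : d * D * d = 1 := by
    rw [hd, hD, diagonal_mul_diagonal, diagonal_mul_diagonal, ← diagonal_one]
    congr 1; ext i; have := hσ0 i; push_cast; field_simp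
  have hdDD : d * (D * D) * d = D := by
    rw [hd, hD, diagonal_mul_diagonal, diagonal_mul_diagonal, diagonal_mul_diagonal]
    congr 1; ext i; have := hσ0 i; push_cast; field_simp
  have hddDD : d * d * (D * D) * (d * d) = 1 := by
    rw [hd, hD, diagonal_mul_diagonal, diagonal_mul_diagonal, diagonal_mul_diagonal,
      diagonal_mul_diagonal, ← diagonal_one]
    congr 1; ext i; have := hσ0 i; push_cast; field_simp
  have hddDDD : d * d * (D * D * D) * (d * d) = D := by
    rw [hd, hD, diagonal_mul_diagonal, diagonal_mul_diagonal, diagonal_mul_diagonal,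
      diagonal_mul_diagonal, diagonal_mul_diagonal]
    congr 1; ext i; have := hσ0 i; push_cast; field_simp
  rcases le_total p 2 with hp2 | hp2
  · refine my_core hp hq hpq hp2 hA hB (A * Yᴴ * J * d) ?_ σ hl hσ ?_
    · rw [← hdD, ← h1, hMdef]
      simp only [conjTranspose_mul, conjTranspose_conjTranspose, hAh, hdh, Matrix.mul_assoc]
    · rw [← hY]
      rw [← hD, ← hdDD, ← h2, hMdef]
      simp only [conjTranspose_mul, conjTranspose_conjTranspose, hAh, hdh, Matrix.mul_assoc]
  · have hq2 : q ≤ 2 := by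
      field_simp at hpq
      nlinarith
    have := my_core hq hp (by linarith) hq2 hB hA (B * (A * A) * Yᴴ * J * (d * d)) ?_ σ hl hσ ?_
    · obtain ⟨S, hS, h⟩ := this
      exact ⟨S, hS, by rwa [add_comm] at h⟩
    · rw [← hddDD, ← h2, hMdef]
      calc _ = d * d * (Jᴴ * (Y * (A * A) * (B * B) * (A * A) * Yᴴ) * J) * (d * d) := by
            simp only [conjTranspose_mul, conjTranspose_conjTranspose, hAh, hBh, hdh, Matrix.mul_assoc]
        _ = _ := by
            rw [← hY]
            simp only [Matrix.mul_assoc]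
    · rw [← hD, ← hddDDD, ← h3, hMdef]
      calc _ = d * d * (Jᴴ * (Y * (A * A) * (B * B) * (A * A) * (B * B) * (A * A) * Yᴴ) * J) * (d * d) := by
            simp only [conjTranspose_mul, conjTranspose_conjTranspose, hAh, hBh, hdh, Matrix.mul_assoc]
        _ = _ := by
            rw [← hY]
            simp only [Matrix.mul_assoc]

lemma my_spectral {n : Type*} [Fintype n] [DecidableEq n] {H : Matrix n n ℂ} (hH : H.IsHermitian) :
    H = (hH.eigenvectorUnitary : Matrix n n ℂ) * diagonal (fun i => (hH.eigenvalues i : ℂ)) *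
      (hH.eigenvectorUnitary : Matrix n n ℂ)ᴴ := by
  have := hH.spectral_theorem
  rw [Unitary.conjStarAlgAut_apply] at this
  exact this

lemma my_unit {n : Type*} [Fintype n] [DecidableEq n] {H : Matrix n n ℂ} (hH : H.IsHermitian) :
    (hH.eigenvectorUnitary : Matrix n n ℂ)ᴴ * (hH.eigenvectorUnitary : Matrix n n ℂ) = 1 :=
  Unitary.coe_star_mul_self _

lemma my_unit' {n : Type*} [Fintype n] [DecidableEq n] {H : Matrix n n ℂ} (hH : H.IsHermitian) :
    (hH.eigenvectorUnitary : Matrix n n ℂ) * (hH.eigenvectorUnitary : Matrix n n ℂ)ᴴ = 1 :=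
  Unitary.coe_mul_star_self _

lemma my_eig {n : Type*} [Fintype n] [DecidableEq n] {H : Matrix n n ℂ} (hH : H.IsHermitian)
    {N : ℕ} (r : n → Fin N) (hr : Function.Injective r)
    (hanti : ∀ i j, r i ≤ r j → hH.eigenvalues j ≤ hH.eigenvalues i) (i : n)
    (S : Matrix n {j // r j ≤ r i} ℂ) (hS : Sᴴ * S = 1) {l : ℝ}
    (h : l • (1 : Matrix {j // r j ≤ r i} {j // r j ≤ r i} ℂ) ≤ Sᴴ * H * S) :
    l ≤ hH.eigenvalues i := by
  by_contra! hlt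
  set V := (hH.eigenvectorUnitary : Matrix n n ℂ) with hV
  set C := Vᴴ * S with hC
  have hCC : Cᴴ * C = 1 := by
    rw [hC, conjTranspose_mul, conjTranspose_conjTranspose, Matrix.mul_assoc, ← Matrix.mul_assoc V,
      my_unit' hH, Matrix.one_mul, hS]
  let C' : Matrix {j // r j < r i} {j // r j ≤ r i} ℂ := C.submatrix Subtype.val id
  obtain ⟨y, hy, hy0⟩ : ∃ y, C' *ᵥ y = 0 ∧ y ≠ 0 := by
    have hlt : Module.finrank ℂ ({j // r j < r i} → ℂ) < Module.finrank ℂ ({j // r j ≤ r i} → ℂ) := by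
      simp only [Module.finrank_fintype_fun_eq_card]
      apply Fintype.card_lt_of_injective_of_notMem
        (fun x : {j // r j < r i} => (⟨x.1, x.2.le⟩ : {j // r j ≤ r i})) (b := ⟨i, le_rfl⟩)
      · intro a b hab
        simpa [Subtype.ext_iff] using hab
      · rintro ⟨x, hx⟩
        have h1 : x.1 = i := congrArg Subtype.val hx
        have := x.2
        rw [h1] at this
        exact lt_irrefl _ this
    have := LinearMap.ker_ne_bot_of_finrank_lt (f := C'.mulVecLin) hlt
    obtain ⟨y, hy, hy0⟩ := Submodule.exists_mem_ne_zero_of_ne_bot this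
    exact ⟨y, by simpa using hy, hy0⟩
  set z := C *ᵥ y with hz
  have hz0 : ∀ j, r j < r i → z j = 0 := fun j hj => congrFun hy ⟨j, hj⟩
  have hdiff : Sᴴ * H * S - l • (1 : Matrix {j // r j ≤ r i} {j // r j ≤ r i} ℂ)
      = Cᴴ * diagonal (fun j => ((hH.eigenvalues j - l : ℝ) : ℂ)) * C := by
    have e : diagonal (fun j => ((hH.eigenvalues j - l : ℝ) : ℂ))
        = diagonal (fun j => (hH.eigenvalues j : ℂ)) - l • (1 : Matrix n n ℂ) := by
      ext a b
      by_cases hab : a = b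
      · subst hab; simp
      · simp [hab]
    rw [e, Matrix.mul_sub, Matrix.sub_mul, Matrix.mul_smul, Matrix.smul_mul, Matrix.mul_one, hCC]
    congr 1
    conv_lhs => rw [my_spectral hH]
    rw [hC, conjTranspose_mul, conjTranspose_conjTranspose]
    simp only [Matrix.mul_assoc, hV]
  rw [Matrix.le_iff, hdiff] at h
  have h2 := h.dotProduct_mulVec_nonneg y
  have h3 : star y ⬝ᵥ (Cᴴ * diagonal (fun j => ((hH.eigenvalues j - l : ℝ) : ℂ)) * C) *ᵥ y
      = ((∑ j, (hH.eigenvalues j - l) * Complex.normSq (z j) : ℝ) : ℂ) := by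
    clear_value C
    rw [Matrix.mul_assoc, ← mulVec_mulVec, dotProduct_mulVec, vecMul_conjTranspose, star_star,
      ← mulVec_mulVec, ← hz, dotProduct]
    push_cast
    refine Finset.sum_congr rfl fun j _ => ?_
    rw [mulVec_diagonal, Pi.star_apply, Complex.normSq_eq_conj_mul_self]
    push_cast
    simp only [RCLike.star_def]
    ring
  rw [h3] at h2
  have h4 : 0 ≤ ∑ j, (hH.eigenvalues j - l) * Complex.normSq (z j) := by exact_mod_cast h2
  have h5 : ∀ j ∈ Finset.univ, (hH.eigenvalues j - l) * Complex.normSq (z j) ≤ 0 := by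
    intro j _
    rcases lt_or_ge (r j) (r i) with hj | hj
    · simp [hz0 j hj]
    · have := hanti i j hj
      exact mul_nonpos_of_nonpos_of_nonneg (by linarith) (Complex.normSq_nonneg _)
  have h6 := (Finset.sum_eq_zero_iff_of_nonpos h5).1 (le_antisymm (Finset.sum_nonpos h5) h4)
  have hzz : z = 0 := by
    ext j
    rcases lt_or_ge (r j) (r i) with hj | hj
    · exact hz0 j hj
    · have := hanti i j hj
      have h7 := h6 j (Finset.mem_univ _)
      rcases mul_eq_zero.1 h7 with h8 | h8
      · linarith
      · simpa using h8
  apply hy0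
  have : Cᴴ *ᵥ z = y := by rw [hz, mulVec_mulVec, hCC, one_mulVec]
  rw [← this, hzz, mulVec_zero]

lemma my_sqrt {n : ℕ} {A : Matrix (Fin n) (Fin n) ℂ} (hA : A.PosSemidef) :
    hA.sqrt = (hA.1.eigenvectorUnitary : Matrix (Fin n) (Fin n) ℂ) *
      diagonal (fun i => ((Real.sqrt (hA.1.eigenvalues i) : ℝ) : ℂ)) *
      (hA.1.eigenvectorUnitary : Matrix (Fin n) (Fin n) ℂ)ᴴ := rfl

lemma my_abs_nonneg {n : ℕ} (Z : Matrix (Fin n) (Fin n) ℂ) : 0 ≤ matAbs Z := by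
  rw [matAbs, my_sqrt, Matrix.nonneg_iff_posSemidef]
  apply PosSemidef.mul_mul_conjTranspose_same
  rw [posSemidef_diagonal_iff]
  intro i
  exact_mod_cast Real.sqrt_nonneg _

lemma my_abs_sq {n : ℕ} (Z : Matrix (Fin n) (Fin n) ℂ) : matAbs Z * matAbs Z = Zᴴ * Z := by
  have hZ := Matrix.posSemidef_conjTranspose_mul_self Z
  rw [matAbs, my_sqrt]
  conv_rhs => rw [my_spectral hZ.1]
  have : diagonal (fun i => (hZ.1.eigenvalues i : ℂ))
      = diagonal (fun i => ((Real.sqrt (hZ.1.eigenvalues i) : ℝ) : ℂ)) *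
        diagonal (fun i => ((Real.sqrt (hZ.1.eigenvalues i) : ℝ) : ℂ)) := by
    rw [diagonal_mul_diagonal]
    congr 1; ext i
    rw [← Complex.ofReal_mul, Real.mul_self_sqrt (hZ.eigenvalues_nonneg i)]
  rw [this]
  simp only [Matrix.mul_assoc]
  rw [← Matrix.mul_assoc _ᴴ, my_unit, Matrix.one_mul]

lemma my_matRpow {n : ℕ} {A : Matrix (Fin n) (Fin n) ℂ} (hA : 0 ≤ A) (p : ℝ) :
    matRpow A p = cfc (fun t : ℝ => t ^ p) A := by
  rw [matRpow, dif_pos hA.posSemidef.1, Matrix.IsHermitian.cfc_eq]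

lemma my_main {n : ℕ} (p q : ℝ) (hp : 0 < p) (hq : 0 < q)
    (hpq : 1 / p + 1 / q = 1) (X Y : Matrix (Fin n) (Fin n) ℂ) :
    ∃ U : Matrix (Fin n) (Fin n) ℂ, Uᴴ * U = 1 ∧
      (U * ((p⁻¹ : ℂ) • matRpow (matAbs X) p + (q⁻¹ : ℂ) • matRpow (matAbs Y) q) * Uᴴ -
          matAbs (X * Yᴴ)).PosSemidef := by
  have hA := my_abs_nonneg X
  have hB := my_abs_nonneg Y
  have hAA := my_abs_sq X
  have hBB := my_abs_sq Y
  rw [my_matRpow hA, my_matRpow hB]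
  set A := matAbs X
  set B := matAbs Y
  have hH' : ((p⁻¹ : ℂ) • cfc (fun t : ℝ => t ^ p) A + (q⁻¹ : ℂ) • cfc (fun t : ℝ => t ^ q) B)
      = p⁻¹ • cfc (fun t : ℝ => t ^ p) A + q⁻¹ • cfc (fun t : ℝ => t ^ q) B := by
    rw [← Complex.ofReal_inv, ← Complex.ofReal_inv, Complex.coe_smul, Complex.coe_smul]
  rw [hH']
  set H := p⁻¹ • cfc (fun t : ℝ => t ^ p) A + q⁻¹ • cfc (fun t : ℝ => t ^ q) B with hHdef
  have hH0 : 0 ≤ H := by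
    apply add_nonneg
    · exact smul_nonneg (by positivity)
        (cfc_nonneg fun x hx => Real.rpow_nonneg (my_spec_nonneg hA hx) _)
    · exact smul_nonneg (by positivity)
        (cfc_nonneg fun x hx => Real.rpow_nonneg (my_spec_nonneg hB hx) _)
  have hHh : H.IsHermitian := hH0.posSemidef.1
  have hZ := Matrix.posSemidef_conjTranspose_mul_self (X * Yᴴ)
  let r : Fin n → Fin (Fintype.card (Fin n)) :=
    (Fintype.equivOfCardEq (Fintype.card_fin _)).symm
  have hr : Function.Injective r := Equiv.injective _
  have hle : ∀ i, Real.sqrt (hZ.1.eigenvalues i) ≤ hHh.eigenvalues i := by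
    intro i
    rcases (Real.sqrt_nonneg (hZ.1.eigenvalues i)).eq_or_lt with h0 | h0
    · rw [← h0]; exact hH0.posSemidef.eigenvalues_nonneg i
    set V := (hZ.1.eigenvectorUnitary : Matrix (Fin n) (Fin n) ℂ) with hV
    let J : Matrix (Fin n) {j // r j ≤ r i} ℂ := V.submatrix id Subtype.val
    have hJ : Jᴴ * J = 1 := by
      have h1 : Jᴴ * J = (Vᴴ * V).submatrix Subtype.val Subtype.val := by
        ext a b; simp [J, Matrix.mul_apply]
      rw [h1, my_unit hZ.1, submatrix_one _ Subtype.val_injective]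
    have hM : Y * (A * A) * Yᴴ * J
        = J * diagonal (fun j => ((Real.sqrt (hZ.1.eigenvalues j.1) ^ 2 : ℝ) : ℂ)) := by
      have h1 : Y * (A * A) * Yᴴ = (X * Yᴴ)ᴴ * (X * Yᴴ) := by
        rw [hAA, conjTranspose_mul, conjTranspose_conjTranspose]; simp only [Matrix.mul_assoc]
      have h2 : (X * Yᴴ)ᴴ * (X * Yᴴ) * V = V * diagonal (fun j => (hZ.1.eigenvalues j : ℂ)) := by
        conv_lhs => rw [my_spectral hZ.1]
        rw [Matrix.mul_assoc, my_unit, Matrix.mul_one]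
      rw [h1]
      ext a b
      have h3 := congrFun (congrFun h2 a) b.1
      rw [mul_diagonal] at h3
      refine Eq.trans h3 (Eq.trans ?_ (Matrix.mul_diagonal _ _ _ _).symm)
      rw [Real.sq_sqrt (hZ.eigenvalues_nonneg _)]
      rfl
    obtain ⟨S, hS, h⟩ := my_key hp hq hpq hA hB hBB.symm J hJ _ h0
      (fun j => Real.sqrt_le_sqrt (hZ.1.eigenvalues₀_antitone j.2)) hM
    exact my_eig hHh r hr (fun a b hab => hHh.eigenvalues₀_antitone hab) i S hS h
  refine ⟨(hZ.1.eigenvectorUnitary : Matrix (Fin n) (Fin n) ℂ) *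
    (hHh.eigenvectorUnitary : Matrix (Fin n) (Fin n) ℂ)ᴴ, ?_, ?_⟩
  · rw [conjTranspose_mul, conjTranspose_conjTranspose, Matrix.mul_assoc, ← Matrix.mul_assoc _ᴴ,
      my_unit, Matrix.one_mul, my_unit']
  · rw [matAbs, my_sqrt]
    set V := (hZ.1.eigenvectorUnitary : Matrix (Fin n) (Fin n) ℂ) with hV
    have hd : (hHh.eigenvectorUnitary : Matrix (Fin n) (Fin n) ℂ)ᴴ * H *
        (hHh.eigenvectorUnitary : Matrix (Fin n) (Fin n) ℂ)
        = diagonal (fun j => (hHh.eigenvalues j : ℂ)) := by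
      conv_lhs => rw [Matrix.mul_assoc]; enter [2, 1]; rw [my_spectral hHh]
      rw [Matrix.mul_assoc, my_unit, Matrix.mul_one, ← Matrix.mul_assoc, my_unit, Matrix.one_mul]
    have e : V * (hHh.eigenvectorUnitary : Matrix (Fin n) (Fin n) ℂ)ᴴ * H *
        (V * (hHh.eigenvectorUnitary : Matrix (Fin n) (Fin n) ℂ)ᴴ)ᴴ
        - V * diagonal (fun i => ((Real.sqrt (hZ.1.eigenvalues i) : ℝ) : ℂ)) * Vᴴ
        = V * diagonal (fun i => ((hHh.eigenvalues i - Real.sqrt (hZ.1.eigenvalues i) : ℝ) : ℂ)) * Vᴴ := by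
      have e1 : diagonal (fun i => ((hHh.eigenvalues i - Real.sqrt (hZ.1.eigenvalues i) : ℝ) : ℂ))
          = diagonal (fun i => (hHh.eigenvalues i : ℂ)) -
            diagonal (fun i => ((Real.sqrt (hZ.1.eigenvalues i) : ℝ) : ℂ)) := by
        rw [diagonal_sub]; congr 1; ext i; push_cast; rfl
      rw [e1, Matrix.mul_sub, Matrix.sub_mul, ← hd, conjTranspose_mul, conjTranspose_conjTranspose]
      simp only [Matrix.mul_assoc]
    rw [e]
    apply PosSemidef.mul_mul_conjTranspose_same
    rw [posSemidef_diagonal_iff]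
    intro i
    exact_mod_cast sub_nonneg.2 (hle i)
end helpers

/-- **Young's inequality in singular values (matrix form, up to a unitary).** -/
theorem matrix_young_loewner {n : ℕ} (p q : ℝ) (hp : 0 < p) (hq : 0 < q)
    (hpq : 1 / p + 1 / q = 1) (X Y : Matrix (Fin n) (Fin n) ℂ) :
    ∃ U : Matrix (Fin n) (Fin n) ℂ, Uᴴ * U = 1 ∧
      (U * ((p⁻¹ : ℂ) • matRpow (matAbs X) p + (q⁻¹ : ℂ) • matRpow (matAbs Y) q) * Uᴴ -
          matAbs (X * Yᴴ)).PosSemidef := by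
  exact my_main p q hp hq hpq X Y
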